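/- arXiv:2208.05078 — 2 statements merged into one kernel-verified Lean document; each statement's English description precedes it below -/
import Mathlib

section
/- For positive integers R, s, N satisfying R ≥ 2√(3(s−1)N)/π, |{𝐤 ∈ ℕ₀^s ∖ {0} : ‖𝛋‖₁ ≤ N + R and ‖⌈𝛋⌉‖₁ > R}| < C(R + s, s − 1) · N · exp(π√(sN/3)), where C(·,·) denotes a binomial coefficient. -/
open MeasureTheory ProbabilityTheory
open scoped ENNReal

namespace MedianQMC


/-- The set of 0-indexed positions of nonzero binary digits of `k`
(so `κ`, the 1-indexed set from the paper, is the image of this under `·+1`). -/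
def bitFinset (k : ℕ) : Finset ℕ := (Finset.range (k+1)).filter (fun i => k.testBit i)

/-- `‖κ‖₁ = ∑_{ℓ∈κ} ℓ` for the 1-indexed digit set `κ` of `k`. -/
def norm1 (k : ℕ) : ℕ := ∑ i ∈ bitFinset k, (i+1)

/-- `‖𝛋‖₁`. -/
def norm1Vec {s : ℕ} (k : Fin s → ℕ) : ℕ := ∑ j, norm1 (k j)

/-- `‖𝛋‖₀`, the total number of nonzero binary digits. -/
def norm0Vec {s : ℕ} (k : Fin s → ℕ) : ℕ := ∑ j, (bitFinset (k j)).card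

/-- `‖⌈𝛋⌉‖₁`; note `⌈κ_j⌉ = Nat.size (k j)`. -/
def ceilSum {s : ℕ} (k : Fin s → ℕ) : ℕ := ∑ j, Nat.size (k j)

/-- the support `s(𝐤)`. -/
def supp {s : ℕ} (k : Fin s → ℕ) : Finset (Fin s) := Finset.univ.filter (fun j => k j ≠ 0)

/-- Row `i` (0-indexed; paper row `i+1`) of `C j`, as a vector, `0` if out of range. -/
def rowOf {s m : ℕ} (C : Fin s → Matrix (Fin m) (Fin m) (ZMod 2)) (j : Fin s) (i : ℕ) :
    Fin m → ZMod 2 :=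
  fun c => if h : i < m then C j ⟨i, h⟩ c else 0

/-- The row space of the stacked matrix `C^{(q)}` consisting of the first `q j` rows of each `C j`. -/
def rowSpace {s m : ℕ} (C : Fin s → Matrix (Fin m) (Fin m) (ZMod 2)) (q : Fin s → ℕ) :
    Submodule (ZMod 2) (Fin m → ZMod 2) :=
  Submodule.span (ZMod 2) {v | ∃ j i, i < q j ∧ v = rowOf C j i}

/-- The rank of the stacked matrix `C^{(q)}`. -/
noncomputable def stackRank {s m : ℕ} (C : Fin s → Matrix (Fin m) (Fin m) (ZMod 2))
    (q : Fin s → ℕ) : ℕ :=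
  Module.finrank (ZMod 2) (rowSpace C q)

/-- `C₁,…,C_s` generate a digital `(t,m,s)`-net in base 2: every stacked matrix `C^{(q)}`
with `∑ q j = m - t` has full row rank `m - t`.  (Note each row of `C^{(q)}` is a genuine
row since `q j ≤ m - t ≤ m` automatically.) -/
def IsDigitalNet {s m : ℕ} (t : ℕ) (C : Fin s → Matrix (Fin m) (Fin m) (ZMod 2)) : Prop :=
  ∀ q : Fin s → ℕ, (∑ j, q j) = m - t → stackRank C q = m - t

/-- structural constraints of a linear scramble matrix with rows indexed by `ℕ`
(0-indexed; paper row `ℓ` is row `ℓ-1` here): ones on the diagonal, zeros above it. -/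
def IsLinearScramble {s m : ℕ} (M : Fin s → ℕ → Fin m → ZMod 2) : Prop :=
  ∀ j : Fin s, ∀ r : Fin m, M j (r : ℕ) r = 1 ∧ ∀ ℓ : ℕ, ℓ < (r : ℕ) → M j ℓ r = 0

/-- The condition `∑_{j=1}^s k⃗_jᵀ M_j C_j = 0`. -/
def ZeroCond {s m : ℕ} (C : Fin s → Matrix (Fin m) (Fin m) (ZMod 2))
    (M : Fin s → ℕ → Fin m → ZMod 2) (k : Fin s → ℕ) : Prop :=
  ∀ c : Fin m, (∑ j, ∑ i ∈ bitFinset (k j), ∑ r : Fin m, M j i r * C j r c) = 0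

/-- index type for the free (random) entries of the scramble matrices: entries strictly
below the diagonal, i.e. with column index `< ` row index. -/
def FreeIdx (s m : ℕ) : Type := {p : Fin s × ℕ × Fin m // (p.2.2 : ℕ) < p.2.1}

/-- index type for all random bits of a scramble-with-digital-shift. -/
def ScrIdx (s m : ℕ) : Type := FreeIdx s m ⊕ (Fin s × ℕ)

variable {Ω : Type*}

/-- the family of free entries of the random matrices. -/
def freeVar {s m : ℕ} (M : Ω → Fin s → ℕ → Fin m → ZMod 2) : FreeIdx s m → Ω → ZMod 2 :=
  fun p ω => M ω p.1.1 p.1.2.1 p.1.2.2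

/-- the family of all random bits of a scramble-with-digital-shift. -/
def scrVar {s m : ℕ} (M : Ω → Fin s → ℕ → Fin m → ZMod 2)
    (D : Ω → Fin s → ℕ → ZMod 2) : ScrIdx s m → Ω → ZMod 2
  | Sum.inl p => freeVar M p
  | Sum.inr q => fun ω => D ω q.1 q.2

/-- `x = Σ_{ℓ≥1} 2^{−ℓ} y_ℓ` (here `y` is 0-indexed). -/
noncomputable def coordI (y : ℕ → ZMod 2) : ℝ := ∑' ℓ : ℕ, ((y ℓ).val : ℝ) / 2 ^ (ℓ + 1)

/-- finite-precision coordinate `x = Σ_{ℓ=1}^E 2^{−ℓ} y_ℓ`. -/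
noncomputable def coordF (E : ℕ) (y : ℕ → ZMod 2) : ℝ :=
  ∑ ℓ ∈ Finset.range E, ((y ℓ).val : ℝ) / 2 ^ (ℓ + 1)

/-- digit string `M_j C_j ī + D_j` of the scrambled point `x_{ij}`. -/
def scrDigits {s m : ℕ} (C : Fin s → Matrix (Fin m) (Fin m) (ZMod 2))
    (M : Fin s → ℕ → Fin m → ZMod 2) (D : Fin s → ℕ → ZMod 2) (i : ℕ) (j : Fin s) :
    ℕ → ZMod 2 :=
  fun ℓ => (∑ r : Fin m, M j ℓ r * ∑ c : Fin m, C j r c *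
      (if i.testBit (c : ℕ) then 1 else 0)) + D j ℓ

/-- infinite-precision estimator `μ̂_∞ = 2^{-m} ∑_{i=0}^{2^m-1} f(x_i)`. -/
noncomputable def estInf {s m : ℕ} (f : (Fin s → ℝ) → ℝ)
    (C : Fin s → Matrix (Fin m) (Fin m) (ZMod 2))
    (M : Fin s → ℕ → Fin m → ZMod 2) (D : Fin s → ℕ → ZMod 2) : ℝ :=
  ((2 : ℝ) ^ m)⁻¹ * ∑ i ∈ Finset.range (2 ^ m), f (fun j => coordI (scrDigits C M D i j))

/-- precision-`E` estimator `μ̂_E`. -/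
noncomputable def estE {s m : ℕ} (E : ℕ) (f : (Fin s → ℝ) → ℝ)
    (C : Fin s → Matrix (Fin m) (Fin m) (ZMod 2))
    (M : Fin s → ℕ → Fin m → ZMod 2) (D : Fin s → ℕ → ZMod 2) : ℝ :=
  ((2 : ℝ) ^ m)⁻¹ * ∑ i ∈ Finset.range (2 ^ m), f (fun j => coordF E (scrDigits C M D i j))

/-- half-open unit cube `[0,1)^s`. -/
def cube (s : ℕ) : Set (Fin s → ℝ) := Set.univ.pi fun _ => Set.Ico (0:ℝ) 1

/-- closed unit cube `[0,1]^s`. -/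
def cubeC (s : ℕ) : Set (Fin s → ℝ) := Set.univ.pi fun _ => Set.Icc (0:ℝ) 1

/-- `ℓ`-th (0-indexed; paper `ℓ+1`) binary digit of `x ∈ [0,1)`, using the expansion ending
in zeros for dyadic rationals. -/
noncomputable def rdigit (x : ℝ) (i : ℕ) : ℕ := (⌊x * 2 ^ (i+1)⌋).toNat % 2

/-- Walsh function `wal_k`. -/
noncomputable def walsh (k : ℕ) (x : ℝ) : ℝ := (-1 : ℝ) ^ (∑ i ∈ bitFinset k, rdigit x i)

/-- multivariate Walsh function `wal_𝐤`. -/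
noncomputable def walshVec {s : ℕ} (k : Fin s → ℕ) (x : Fin s → ℝ) : ℝ :=
  ∏ j, walsh (k j) (x j)

/-- Walsh coefficient `f̂(𝐤)`. -/
noncomputable def fhat {s : ℕ} (f : (Fin s → ℝ) → ℝ) (k : Fin s → ℕ) : ℝ :=
  ∫ x in cube s, f x * walshVec k x

/-- the sign `(−1)^{Σ_j k⃗_jᵀ D_j}`. -/
noncomputable def walshSign {s : ℕ} (D : Fin s → ℕ → ZMod 2) (k : Fin s → ℕ) : ℝ :=
  (-1 : ℝ) ^ (∑ j, ∑ i ∈ bitFinset (k j), (D j i).val)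

/-- the constant `λ = 3 log(2)²/π²`. -/
noncomputable def lam : ℝ := 3 * Real.log 2 ^ 2 / Real.pi ^ 2

/-- the `i`-th smallest (0-indexed) of the values `v`. -/
noncomputable def orderStat {n : ℕ} (v : Fin n → ℝ) (i : ℕ) : ℝ :=
  (((List.ofFn v).mergeSort fun a b => @decide (a ≤ b) (Classical.propDecidable _)).getD i 0)

end MedianQMC

namespace MedianQMC

/-!
Rankin's method: for `t > 0`, a vector with `norm1Vec k ≤ N + R` contributes at least `1` to
`∑ exp (t * (N + R - norm1Vec k))`, so this sum bounds the count. Since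
`ceilSum k ≤ norm1Vec k`, only the levels `ceilSum k = R + 1, …, R + N` matter. On the level `n`,
fixing the leading digit position of each coordinate leaves the lower digits free, so the generating
function of `norm1Vec` is `x ^ n` times a sum over compositions of `n` of `s`-fold products of
`(1 + x) (1 + x ^ 2) ⋯`. With `x = exp (-t)`, Euler's identity turns `∏ (1 + x ^ i)` into
`∏ (1 - x ^ (2 * i + 1))⁻¹`, whose logarithm is at most
`∑ 1 / (2 * t * m ^ 2) = π ^ 2 / (12 * t)`. The choice `t = π * √(s * N / 3) / (2 * N)` balances
`s * π ^ 2 / (12 * t)` against `N * t`, and the hypothesis on `R` says that this `t` also absorbs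
the growth of the number of compositions with `n`.
-/

section

open Finset Real

theorem prod_one_add_pow_mul_prod_one_sub_odd_pow {A : Type*} [CommRing A] (x : A) (n : ℕ) :
    (∏ i ∈ range n, (1 + x ^ (i + 1))) * ∏ i ∈ range n, (1 - x ^ (2 * i + 1)) =
      ∏ i ∈ range n, (1 - x ^ (n + i + 1)) := by
  induction n with
  | zero => simp
  | succ n ih =>
    have shift : (1 - x ^ (n + 1)) * ∏ i ∈ range n, (1 - x ^ (n + 1 + i + 1)) =
        (∏ i ∈ range n, (1 - x ^ (n + i + 1))) * (1 - x ^ (2 * n + 1)) := by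
      rw [two_mul, ← prod_range_succ (fun i ↦ 1 - x ^ (n + i + 1)), prod_range_succ', mul_comm,
        add_zero]
      simp only [add_comm, add_left_comm]
    have factor : 1 - x ^ (n + 1 + n + 1) = (1 + x ^ (n + 1)) * (1 - x ^ (n + 1)) := by ring
    rw [prod_range_succ, prod_range_succ, prod_range_succ, factor]
    linear_combination (1 + x ^ (n + 1)) * ((1 - x ^ (2 * n + 1)) * ih - shift)

theorem prod_one_add_pow_mul_prod_one_sub_odd_pow_le_one {x : ℝ} (hx₀ : 0 ≤ x) (hx₁ : x ≤ 1)
    (n : ℕ) :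
    (∏ i ∈ range n, (1 + x ^ (i + 1))) * ∏ i ∈ range n, (1 - x ^ (2 * i + 1)) ≤ 1 := by
  rw [prod_one_add_pow_mul_prod_one_sub_odd_pow]
  exact prod_le_one (fun i _ ↦ sub_nonneg.2 (pow_le_one₀ hx₀ hx₁))
    fun i _ ↦ sub_le_self 1 (pow_nonneg hx₀ _)

theorem sum_exp_neg_odd_pow_le {a : ℝ} (ha : 0 < a) (n : ℕ) :
    ∑ i ∈ range n, exp (-a) ^ (2 * i + 1) ≤ 1 / (2 * a) := by
  set y := exp (-a) with hy
  have hy₁ : y ^ 2 < 1 :=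
    pow_lt_one₀ (exp_pos _).le (exp_lt_one_iff.2 (neg_lt_zero.2 ha)) two_ne_zero
  have geometric : ∑ i ∈ range n, (y ^ 2) ^ i ≤ 1 / (1 - y ^ 2) := by
    simpa only [range_eq_Ico, pow_zero] using
      geom_sum_Ico_le_of_lt_one (m := 0) (n := n) (sq_nonneg y) hy₁
  have sinh_mul : 2 * sinh a * y = 1 - y ^ 2 := by
    have : exp a * y = 1 := by rw [hy, ← exp_add, add_neg_cancel, exp_zero]
    rw [sinh_eq]
    linear_combination this
  calc ∑ i ∈ range n, y ^ (2 * i + 1) = y * ∑ i ∈ range n, (y ^ 2) ^ i := by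
        rw [mul_sum]
        exact sum_congr rfl fun i _ ↦ by ring
    _ ≤ y * (1 / (1 - y ^ 2)) := by gcongr
    _ = 1 / (2 * sinh a) := by
        have : 0 < sinh a := sinh_pos_iff.2 ha
        have : 0 < y := exp_pos _
        rw [← sinh_mul]
        field_simp
    _ ≤ 1 / (2 * a) := by
        gcongr
        exact self_le_sinh_iff.2 ha.le

theorem sum_neg_log_one_sub_exp_neg_odd_pow_le {t : ℝ} (ht : 0 < t) (n : ℕ) :
    ∑ i ∈ range n, -log (1 - exp (-t) ^ (2 * i + 1)) ≤ π ^ 2 / (12 * t) := by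
  have log_series : HasSum
      (fun m : ℕ ↦ ∑ i ∈ range n, (exp (-t) ^ (2 * i + 1)) ^ (m + 1) / ((m : ℝ) + 1))
      (∑ i ∈ range n, -log (1 - exp (-t) ^ (2 * i + 1))) := by
    refine hasSum_sum fun i _ ↦ hasSum_pow_div_log_of_abs_lt_one ?_
    rw [abs_of_pos (by positivity)]
    exact pow_lt_one₀ (exp_pos _).le (exp_lt_one_iff.2 (neg_lt_zero.2 ht)) (Nat.succ_ne_zero _)
  have zeta_series : HasSum (fun m : ℕ ↦ 1 / (2 * t) * (1 / ((m + 1 : ℕ) : ℝ) ^ 2))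
      (1 / (2 * t) * (π ^ 2 / 6)) := by
    refine HasSum.mul_left _ ?_
    simpa using (hasSum_nat_add_iff' (f := fun m : ℕ ↦ (1 : ℝ) / (m : ℝ) ^ 2) 1).2 hasSum_zeta_two
  have term_le (m : ℕ) : ∑ i ∈ range n, (exp (-t) ^ (2 * i + 1)) ^ (m + 1) / ((m : ℝ) + 1) ≤
      1 / (2 * t) * (1 / ((m + 1 : ℕ) : ℝ) ^ 2) := by
    have exp_mul (i : ℕ) :
        (exp (-t) ^ (2 * i + 1)) ^ (m + 1) = exp (-((m + 1) * t)) ^ (2 * i + 1) := by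
      rw [pow_right_comm, ← exp_nat_mul (-t)]
      push_cast
      rw [mul_neg]
    simp only [exp_mul, ← sum_div]
    calc (∑ i ∈ range n, exp (-((m + 1) * t)) ^ (2 * i + 1)) / ((m : ℝ) + 1)
        ≤ 1 / (2 * ((m + 1) * t)) / (m + 1) := by
          gcongr
          exact sum_exp_neg_odd_pow_le (by positivity) n
      _ = 1 / (2 * t) * (1 / ((m + 1 : ℕ) : ℝ) ^ 2) := by
          push_cast
          field_simp
  calc ∑ i ∈ range n, -log (1 - exp (-t) ^ (2 * i + 1)) ≤ 1 / (2 * t) * (π ^ 2 / 6) :=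
        hasSum_le term_le log_series zeta_series
    _ = π ^ 2 / (12 * t) := by
        field_simp
        norm_num

theorem prod_one_add_exp_neg_pow_le {t : ℝ} (ht : 0 < t) (n : ℕ) :
    ∏ i ∈ range n, (1 + exp (-t) ^ (i + 1)) ≤ exp (π ^ 2 / (12 * t)) := by
  have hx : exp (-t) < 1 := exp_lt_one_iff.2 (neg_lt_zero.2 ht)
  have factor_pos (i : ℕ) : 0 < 1 - exp (-t) ^ (2 * i + 1) :=
    sub_pos.2 (pow_lt_one₀ (exp_pos _).le hx (Nat.succ_ne_zero _))
  calc ∏ i ∈ range n, (1 + exp (-t) ^ (i + 1))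
      ≤ (∏ i ∈ range n, (1 - exp (-t) ^ (2 * i + 1)))⁻¹ := by
        rw [← one_div, le_div_iff₀ (prod_pos fun i _ ↦ factor_pos i)]
        exact prod_one_add_pow_mul_prod_one_sub_odd_pow_le_one (exp_pos _).le hx.le n
    _ = exp (∑ i ∈ range n, -log (1 - exp (-t) ^ (2 * i + 1))) := by
        rw [exp_sum, ← prod_inv_distrib]
        exact prod_congr rfl fun i _ ↦ by rw [exp_neg (log _), exp_log (factor_pos i)]
    _ ≤ exp (π ^ 2 / (12 * t)) := exp_le_exp.2 (sum_neg_log_one_sub_exp_neg_odd_pow_le ht n)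

theorem card_piAntidiag_eq_multichoose {ι : Type*} [DecidableEq ι] (u : Finset ι) (n : ℕ) :
    #(u.piAntidiag n) = (#u).multichoose n := by
  rw [← card_finsuppAntidiag_nat_eq_multichoose, finsuppAntidiag, card_map, card_attach]

theorem multichoose_succ_mul (s n : ℕ) :
    s.multichoose (n + 1) * (n + 1) = s.multichoose n * (s + n) := by
  cases s with
  | zero => cases n <;> simp
  | succ s =>
    have := Nat.add_one_mul_choose_eq (s + n) n
    simp only [Nat.multichoose_eq]
    grind

theorem multichoose_succ_eq_choose {s : ℕ} (hs : 1 ≤ s) (n : ℕ) :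
    s.multichoose (n + 1) = (n + s).choose (s - 1) := by
  obtain ⟨d, rfl⟩ := Nat.exists_eq_add_of_le' hs
  rw [Nat.multichoose_eq]
  exact (congrArg (Nat.choose · _) (by omega)).trans (Nat.choose_symm_of_eq_add (by omega))

theorem multichoose_add_le_mul_exp {s n : ℕ} {t : ℝ} (ht : 0 ≤ t) (h : s - 1 ≤ t * (n + 1))
    (r : ℕ) : (s.multichoose (n + r) : ℝ) ≤ s.multichoose n * exp (r * t) := by
  induction r with
  | zero => simp
  | succ r ih =>
    have ratio : (s + (n + r : ℕ) : ℝ) ≤ exp t * ((n + r : ℕ) + 1) := by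
      push_cast
      calc (s + (n + r) : ℝ) ≤ (t + 1) * (n + r + 1) := by nlinarith [mul_nonneg ht r.cast_nonneg]
        _ ≤ exp t * (n + r + 1) := by
          gcongr
          exact add_one_le_exp t
    have recurrence : (s.multichoose (n + r + 1) : ℝ) * ((n + r : ℕ) + 1) =
        s.multichoose (n + r) * (s + (n + r : ℕ)) := mod_cast multichoose_succ_mul s (n + r)
    have step : (s.multichoose (n + r + 1) : ℝ) ≤ s.multichoose (n + r) * exp t := by
      refine le_of_mul_le_mul_right ?_ (Nat.cast_add_one_pos (n + r))
      rw [recurrence, mul_assoc]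
      gcongr
    calc (s.multichoose (n + r + 1) : ℝ) ≤ s.multichoose (n + r) * exp t := step
      _ ≤ s.multichoose n * exp (r * t) * exp t := by gcongr
      _ = s.multichoose n * exp ((r + 1 : ℕ) * t) := by
        rw [mul_assoc, ← exp_add]
        push_cast
        ring_nf

theorem mem_bitFinset {i k : ℕ} : i ∈ bitFinset k ↔ k.testBit i := by
  simp only [bitFinset, mem_filter, mem_range, and_iff_right_iff_imp]
  intro h
  exact (Nat.lt_two_pow_self.trans_le (Nat.ge_two_pow_of_testBit h)).trans (Nat.lt_succ_self k)

theorem bitFinset_two_pow_add {n k : ℕ} (hk : k < 2 ^ n) :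
    bitFinset (2 ^ n + k) = insert n (bitFinset k) := by
  have add_eq_or : 2 ^ n + k = 2 ^ n ||| k := by simpa using Nat.two_pow_add_eq_or_of_lt hk 1
  ext i
  rw [mem_insert, mem_bitFinset, mem_bitFinset, add_eq_or, Nat.testBit_or, Bool.or_eq_true,
    Nat.testBit_two_pow, decide_eq_true_iff, eq_comm]

theorem norm1_two_pow_add {n k : ℕ} (hk : k < 2 ^ n) : norm1 (2 ^ n + k) = n + 1 + norm1 k := by
  have n_notMem : n ∉ bitFinset k := by simp [mem_bitFinset, Nat.testBit_lt_two_pow hk]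
  rw [norm1, bitFinset_two_pow_add hk, sum_insert n_notMem, norm1]

theorem size_le_norm1 (k : ℕ) : k.size ≤ norm1 k := by
  rcases hsize : k.size with _ | n
  · exact Nat.zero_le _
  · have n_mem : n ∈ bitFinset k := mem_bitFinset.2 <|
      Nat.testBit_of_two_pow_le_and_two_pow_add_one_gt (Nat.lt_size.1 (by omega))
        (Nat.size_le.1 hsize.le)
    exact single_le_sum (f := (· + 1)) (fun _ _ ↦ Nat.zero_le _) n_mem

theorem ceilSum_le_norm1Vec {s : ℕ} (k : Fin s → ℕ) : ceilSum k ≤ norm1Vec k :=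
  sum_le_sum fun j _ ↦ size_le_norm1 (k j)

theorem ne_zero_of_lt_ceilSum {R s : ℕ} {k : Fin s → ℕ} (h : R < ceilSum k) : k ≠ 0 := by
  rintro rfl
  simp [ceilSum] at h

/-- The natural numbers with exactly `q` binary digits, the number `0` having none; in the paper's
notation, those with `⌈κ⌉ = q`. -/
def natsOfSize (q : ℕ) : Finset ℕ := {k ∈ range (2 ^ q) | k.size = q}

theorem mem_natsOfSize {q k : ℕ} : k ∈ natsOfSize q ↔ k.size = q := by
  simp only [natsOfSize, mem_filter, mem_range, and_iff_right_iff_imp]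
  exact fun h ↦ Nat.size_le.1 h.le

theorem natsOfSize_succ (n : ℕ) : natsOfSize (n + 1) = Ico (2 ^ n) (2 ^ (n + 1)) := by
  ext k
  rw [mem_natsOfSize, mem_Ico, ← Nat.lt_size, ← Nat.size_le]
  omega

/-- The vectors `k` of length `s` with `ceilSum k = n`, sorted by the sizes `q j` of their
coordinates. -/
def ceilLevel (s n : ℕ) : Finset (Fin s → ℕ) :=
  (piAntidiag univ n).biUnion fun q ↦ Fintype.piFinset fun j ↦ natsOfSize (q j)

theorem mem_ceilLevel {s n : ℕ} {k : Fin s → ℕ} : k ∈ ceilLevel s n ↔ ceilSum k = n := by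
  simp only [ceilLevel, mem_biUnion, mem_piAntidiag, Fintype.mem_piFinset, mem_natsOfSize]
  constructor
  · rintro ⟨q, ⟨hq, -⟩, hk⟩
    rw [ceilSum, ← hq]
    exact sum_congr rfl fun j _ ↦ hk j
  · exact fun h ↦ ⟨fun j ↦ (k j).size, ⟨h, fun j _ ↦ mem_univ j⟩, fun _ ↦ rfl⟩

section GeneratingFunctions

variable {A : Type*} [CommSemiring A] (x : A)

theorem sum_range_pow_norm1_two_pow_add (n : ℕ) :
    ∑ k ∈ range (2 ^ n), x ^ norm1 (2 ^ n + k) =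
      x ^ (n + 1) * ∑ k ∈ range (2 ^ n), x ^ norm1 k := by
  rw [mul_sum]
  exact sum_congr rfl fun k hk ↦ by rw [norm1_two_pow_add (mem_range.1 hk), pow_add]

theorem sum_range_two_pow_pow_norm1 (n : ℕ) :
    ∑ k ∈ range (2 ^ n), x ^ norm1 k = ∏ i ∈ range n, (1 + x ^ (i + 1)) := by
  induction n with
  | zero => simp [norm1, bitFinset]
  | succ n ih =>
    rw [pow_succ, mul_two, sum_range_add, sum_range_pow_norm1_two_pow_add, prod_range_succ, ih]
    ring

theorem sum_natsOfSize_pow_norm1 (q : ℕ) :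
    ∑ k ∈ natsOfSize q, x ^ norm1 k = x ^ q * ∏ i ∈ range (q - 1), (1 + x ^ (i + 1)) := by
  cases q with
  | zero => simp [natsOfSize, norm1, bitFinset, filter_singleton]
  | succ n =>
    have upper_half_card : 2 ^ (n + 1) - 2 ^ n = 2 ^ n := by rw [pow_succ]; omega
    rw [natsOfSize_succ, sum_Ico_eq_sum_range, upper_half_card, sum_range_pow_norm1_two_pow_add,
      sum_range_two_pow_pow_norm1, Nat.add_sub_cancel]

theorem sum_piFinset_natsOfSize_pow_norm1Vec {s : ℕ} (q : Fin s → ℕ) :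
    ∑ k ∈ Fintype.piFinset fun j ↦ natsOfSize (q j), x ^ norm1Vec k =
      x ^ (∑ j, q j) * ∏ j, ∏ i ∈ range (q j - 1), (1 + x ^ (i + 1)) := by
  simp only [norm1Vec, ← prod_pow_eq_pow_sum, ← prod_mul_distrib, ← sum_natsOfSize_pow_norm1,
    prod_univ_sum]

theorem sum_ceilLevel_pow_norm1Vec (s n : ℕ) :
    ∑ k ∈ ceilLevel s n, x ^ norm1Vec k =
      x ^ n * ∑ q ∈ piAntidiag (univ : Finset (Fin s)) n,
        ∏ j, ∏ i ∈ range (q j - 1), (1 + x ^ (i + 1)) := by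
  have disjoint : (piAntidiag (univ : Finset (Fin s)) n : Set (Fin s → ℕ)).PairwiseDisjoint
      fun q ↦ Fintype.piFinset fun j ↦ natsOfSize (q j) := by
    intro q _ q' _ hne
    refine disjoint_left.2 fun k hk hk' ↦ hne (funext fun j ↦ ?_)
    rw [← mem_natsOfSize.1 (Fintype.mem_piFinset.1 hk j),
      mem_natsOfSize.1 (Fintype.mem_piFinset.1 hk' j)]
  rw [ceilLevel, sum_biUnion disjoint, mul_sum]
  refine sum_congr rfl fun q hq ↦ ?_
  rw [sum_piFinset_natsOfSize_pow_norm1Vec, (mem_piAntidiag.1 hq).1]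

end GeneratingFunctions

theorem sum_ceilLevel_exp_neg_pow_norm1Vec_le (s n : ℕ) {t : ℝ} (ht : 0 < t) :
    ∑ k ∈ ceilLevel s n, exp (-t) ^ norm1Vec k ≤
      s.multichoose n * (exp (-t) ^ n * exp (π ^ 2 / (12 * t)) ^ s) := by
  have composition_le (q : Fin s → ℕ) :
      ∏ j, ∏ i ∈ range (q j - 1), (1 + exp (-t) ^ (i + 1)) ≤ exp (π ^ 2 / (12 * t)) ^ s :=
    calc _ ≤ ∏ _j : Fin s, exp (π ^ 2 / (12 * t)) :=
          prod_le_prod (fun j _ ↦ by positivity)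
            fun j _ ↦ prod_one_add_exp_neg_pow_le ht (q j - 1)
      _ = exp (π ^ 2 / (12 * t)) ^ s := by rw [prod_const, card_univ, Fintype.card_fin]
  calc ∑ k ∈ ceilLevel s n, exp (-t) ^ norm1Vec k
      ≤ exp (-t) ^ n * ∑ q ∈ piAntidiag (univ : Finset (Fin s)) n, exp (π ^ 2 / (12 * t)) ^ s := by
        rw [sum_ceilLevel_pow_norm1Vec]
        gcongr with q
        exact composition_le q
    _ = s.multichoose n * (exp (-t) ^ n * exp (π ^ 2 / (12 * t)) ^ s) := by
        rw [sum_const, card_piAntidiag_eq_multichoose, card_univ, Fintype.card_fin, nsmul_eq_mul]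
        ring

theorem setOf_lt_ceilSum_eq_coe_filter (R s N : ℕ) :
    {k : Fin s → ℕ | norm1Vec k ≤ N + R ∧ R < ceilSum k} =
      ({k ∈ (range N).biUnion fun r ↦ ceilLevel s (R + 1 + r) | norm1Vec k ≤ N + R} :
        Finset (Fin s → ℕ)) := by
  ext k
  simp only [Set.mem_ofPred_eq, coe_filter, mem_biUnion, mem_range, mem_ceilLevel]
  constructor
  · rintro ⟨hnorm, hceil⟩
    have := ceilSum_le_norm1Vec k
    exact ⟨⟨ceilSum k - (R + 1), by omega, by omega⟩, hnorm⟩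
  · rintro ⟨⟨r, -, hceil⟩, hnorm⟩
    exact ⟨hnorm, by omega⟩

theorem ncard_lt_ceilSum_mul_pow_le (R s N : ℕ) {x : ℝ} (hx₀ : 0 ≤ x) (hx₁ : x ≤ 1) :
    {k : Fin s → ℕ | norm1Vec k ≤ N + R ∧ R < ceilSum k}.ncard * x ^ (N + R) ≤
      ∑ r ∈ range N, ∑ k ∈ ceilLevel s (R + 1 + r), x ^ norm1Vec k := by
  have disjoint : (range N : Set ℕ).PairwiseDisjoint fun r ↦ ceilLevel s (R + 1 + r) := by
    intro r _ r' _ hne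
    refine disjoint_left.2 fun k hk hk' ↦ hne ?_
    have := (mem_ceilLevel.1 hk).symm.trans (mem_ceilLevel.1 hk')
    omega
  rw [setOf_lt_ceilSum_eq_coe_filter, Set.ncard_coe_finset, ← nsmul_eq_mul, ← sum_biUnion disjoint]
  calc _ ≤ ∑ k ∈ (range N).biUnion fun r ↦ ceilLevel s (R + 1 + r) with norm1Vec k ≤ N + R,
        x ^ norm1Vec k :=
        card_nsmul_le_sum _ _ _ fun k hk ↦ pow_le_pow_of_le_one hx₀ hx₁ (mem_filter.1 hk).2
    _ ≤ _ := sum_le_sum_of_subset_of_nonneg (filter_subset _ _) fun _ _ _ ↦ pow_nonneg hx₀ _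

theorem ncard_lt_ceilSum_le {R s N : ℕ} {t : ℝ} (ht : 0 < t) (h : s - 1 ≤ t * (R + 2)) :
    ({k : Fin s → ℕ | norm1Vec k ≤ N + R ∧ R < ceilSum k}.ncard : ℝ) ≤
      s.multichoose (R + 1) * N * exp (s * (π ^ 2 / (12 * t)) + N * t - t) := by
  have multichoose_le (r : ℕ) :
      (s.multichoose (R + 1 + r) : ℝ) ≤ s.multichoose (R + 1) * exp (r * t) :=
    multichoose_add_le_mul_exp ht.le (by push_cast; linarith) r
  have level_le (r : ℕ) : ∑ k ∈ ceilLevel s (R + 1 + r), exp (-t) ^ norm1Vec k ≤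
      s.multichoose (R + 1) * exp (s * (π ^ 2 / (12 * t)) + N * t - t) * exp (-t) ^ (N + R) :=
    calc _ ≤ s.multichoose (R + 1 + r) *
          (exp (-t) ^ (R + 1 + r) * exp (π ^ 2 / (12 * t)) ^ s) :=
          sum_ceilLevel_exp_neg_pow_norm1Vec_le s _ ht
      _ ≤ s.multichoose (R + 1) * exp (r * t) *
          (exp (-t) ^ (R + 1 + r) * exp (π ^ 2 / (12 * t)) ^ s) := by
          gcongr
          exact multichoose_le r
      _ = _ := by
          simp only [← exp_nat_mul, mul_assoc, ← exp_add]
          push_cast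
          ring_nf
  refine le_of_mul_le_mul_right ?_ (pow_pos (exp_pos (-t)) (N + R))
  calc _ ≤ ∑ r ∈ range N, ∑ k ∈ ceilLevel s (R + 1 + r), exp (-t) ^ norm1Vec k :=
        ncard_lt_ceilSum_mul_pow_le R s N (exp_pos _).le (exp_le_one_iff.2 (neg_nonpos.2 ht.le))
    _ ≤ #(range N) • (s.multichoose (R + 1) * exp (s * (π ^ 2 / (12 * t)) + N * t - t) *
          exp (-t) ^ (N + R)) := sum_le_card_nsmul _ _ _ fun r _ ↦ level_le r
    _ = _ := by
        rw [card_range, nsmul_eq_mul]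
        ring

theorem sub_one_le_pi_mul_sqrt_div_mul {R s N : ℝ} (hs : 1 ≤ s) (hN : 0 < N)
    (h : 2 * √(3 * (s - 1) * N) / π ≤ R) : s - 1 ≤ π * √(s * N / 3) / (2 * N) * R := by
  have geometric_mean : (s - 1) * N ≤ √(s * N / 3) * √(3 * (s - 1) * N) := by
    rw [← sqrt_mul (by positivity)]
    refine le_sqrt_of_sq_le ?_
    nlinarith [mul_nonneg (sub_nonneg.2 hs) (sq_nonneg N)]
  calc s - 1 = (s - 1) * N / N := (mul_div_cancel_right₀ _ hN.ne').symm
    _ ≤ √(s * N / 3) * √(3 * (s - 1) * N) / N := by gcongr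
    _ = π * √(s * N / 3) / (2 * N) * (2 * √(3 * (s - 1) * N) / π) := by field_simp
    _ ≤ π * √(s * N / 3) / (2 * N) * R := by gcongr

theorem saddle_exponent_eq {s N : ℝ} (hs : 0 < s) (hN : 0 < N) :
    s * (π ^ 2 / (12 * (π * √(s * N / 3) / (2 * N)))) + N * (π * √(s * N / 3) / (2 * N)) =
      π * √(s * N / 3) := by
  have : 0 < √(s * N / 3) := sqrt_pos.2 (by positivity)
  have root_sq : √(s * N / 3) ^ 2 = s * N / 3 := sq_sqrt (by positivity)
  field_simp
  rw [root_sq]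
  ring

end

/-- for positive `R, s, N` with `R ≥ 2√(3(s−1)N)/π`, the number of
`𝐤 ∈ ℕ₀^s ∖ {0}` with `‖𝛋‖₁ ≤ N + R` and `‖⌈𝛋⌉‖₁ > R` is less than
`C(R+s, s−1)·N·exp(π√(sN/3))`. -/
theorem count_ceil_lt (R s N : ℕ) (hR : 1 ≤ R) (hs : 1 ≤ s) (hN : 1 ≤ N)
    (h : 2 * Real.sqrt (3 * (s - 1 : ℝ) * N) / Real.pi ≤ R) :
    ({k : Fin s → ℕ | k ≠ 0 ∧ norm1Vec k ≤ N + R ∧ R < ceilSum k}.ncard : ℝ) <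
      (Nat.choose (R + s) (s - 1) : ℝ) * N * Real.exp (Real.pi * Real.sqrt (s * N / 3)) := by
  set t := Real.pi * √(s * N / 3) / (2 * N)
  have hs' : (1 : ℝ) ≤ s := mod_cast hs
  have hN' : (0 : ℝ) < N := mod_cast hN
  have t_pos : 0 < t := by positivity
  have growth : (s : ℝ) - 1 ≤ t * (R + 2) := by
    linarith [sub_one_le_pi_mul_sqrt_div_mul hs' hN' h]
  have exponent : s * (Real.pi ^ 2 / (12 * t)) + N * t = Real.pi * √(s * N / 3) :=
    saddle_exponent_eq (zero_lt_one.trans_le hs') hN'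
  have nonzero_automatic : {k : Fin s → ℕ | k ≠ 0 ∧ norm1Vec k ≤ N + R ∧ R < ceilSum k} =
      {k | norm1Vec k ≤ N + R ∧ R < ceilSum k} :=
    Set.ext fun _ ↦ and_iff_right_of_imp fun hk ↦ ne_zero_of_lt_ceilSum hk.2
  have choose_pos : 0 < (R + s).choose (s - 1) := Nat.choose_pos (by omega)
  calc ({k : Fin s → ℕ | k ≠ 0 ∧ norm1Vec k ≤ N + R ∧ R < ceilSum k}.ncard : ℝ)
      ≤ (R + s).choose (s - 1) * N * Real.exp (Real.pi * √(s * N / 3) - t) := by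
        rw [nonzero_automatic, ← exponent, ← multichoose_succ_eq_choose hs]
        exact ncard_lt_ceilSum_le t_pos growth
    _ < (R + s).choose (s - 1) * N * Real.exp (Real.pi * √(s * N / 3)) := by
        gcongr
        linarith

end MedianQMC
end

section
/- Let λ = 3 log(2)²/π². Fix an integer s ≥ 1 and a real ρ ∈ (0,1). Then there exists a constant B₁ such that for all integers m ≥ 2, Σ over 𝐤 ∈ ℕ₀^s ∖ {0} with ‖𝛋‖₁ > λm²/s of 2^{−‖𝛋‖₁} · ρ^{−‖𝛋‖₀} · (‖𝛋‖₀)! is at most 2^{−λm²/s + B₁ m log₂ m} (in particular this sum converges). -/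
open MeasureTheory ProbabilityTheory
open scoped ENNReal

namespace MedianQMC

/-! This is Rankin's trick: for `0 < δ ≤ 1` and `‖𝛋‖₁ ≥ T` we have
`2^{-‖𝛋‖₁} ≤ 2^{-(1 - δ) T} 2^{-δ ‖𝛋‖₁}`. Half of the factor `2^{-δ ‖𝛋‖₁}` absorbs
`ρ^{-‖𝛋‖₀} ‖𝛋‖₀!` up to a constant, because `s` finite sets of positive integers with `n` elements
in total have total sum at least `n² / (2s)`. The other half, summed over `𝐤`, is at most
`∏ (1 + q^ℓ)^s ≤ exp (s q / (1 - q))` with `q = 2^{-δ/2}`. For `T = λm²/s` and `δ = log₂ m / m`,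
the logarithms of these two bounds, as well as `δ T`, are of order `m log₂ m`. -/

theorem le_two_rpow_self (x : ℝ) : x ≤ (2 : ℝ) ^ x := by
  rcases le_total x 0 with hx | hx
  · exact hx.trans (by positivity)
  have one_le : 1 ≤ Real.exp 1 * Real.log 2 := by
    nlinarith [Real.exp_one_gt_d9, Real.log_two_gt_d9]
  calc x ≤ Real.exp 1 * Real.log 2 * x := le_mul_of_one_le_left hx one_le
    _ = Real.exp 1 * (Real.log 2 * x) := mul_assoc _ _ _
    _ ≤ Real.exp (Real.log 2 * x) := Real.exp_one_mul_le_exp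
    _ = 2 ^ x := (Real.rpow_def_of_pos two_pos x).symm

theorem pow_mul_factorial_le_two_rpow {r a : ℝ} (hr : 0 < r) (ha : 0 < a) (n : ℕ) :
    r ^ n * n.factorial ≤ (2 : ℝ) ^ (2 * a * n ^ 2 + Real.logb 2 (r / a) ^ 2 / (4 * a)) := by
  set l := Real.logb 2 (r / a)
  have base_le : r * n ≤ (2 : ℝ) ^ (l + a * n) := by
    rw [Real.rpow_add two_pos, Real.rpow_logb two_pos (by norm_num) (by positivity)]
    calc r * n = r / a * (a * n) := by field_simp
      _ ≤ r / a * 2 ^ (a * n) := by gcongr; exact le_two_rpow_self _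
  have exponent_le : (l + a * n) * n ≤ 2 * a * n ^ 2 + l ^ 2 / (4 * a) := by
    have nonneg : 0 ≤ (2 * a * n - l) ^ 2 / (4 * a) := by positivity
    have expand : (2 * a * n - l) ^ 2 / (4 * a) = a * n ^ 2 - l * n + l ^ 2 / (4 * a) := by
      field_simp; ring
    linarith
  calc r ^ n * n.factorial ≤ r ^ n * (n : ℝ) ^ n := by
        gcongr; exact_mod_cast n.factorial_le_pow
    _ = (r * n) ^ n := (mul_pow _ _ _).symm
    _ ≤ ((2 : ℝ) ^ (l + a * n)) ^ n := by gcongr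
    _ = 2 ^ ((l + a * n) * n) := by rw [Real.rpow_mul two_pos.le, Real.rpow_natCast]
    _ ≤ _ := Real.rpow_le_rpow_of_exponent_le one_le_two exponent_le

theorem two_rpow_neg_div_one_sub_le {x : ℝ} (hx : 0 < x) :
    (2 : ℝ) ^ (-x) / (1 - 2 ^ (-x)) ≤ 1 / (x * Real.log 2) := by
  have lt_one : (2 : ℝ) ^ (-x) < 1 :=
    Real.rpow_lt_one_of_one_lt_of_neg one_lt_two (neg_lt_zero.mpr hx)
  have one_add_le : x * Real.log 2 + 1 ≤ (2 : ℝ) ^ x := by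
    rw [Real.rpow_def_of_pos two_pos, mul_comm x]
    exact Real.add_one_le_exp _
  have mul_eq_one : (2 : ℝ) ^ (-x) * 2 ^ x = 1 := by simp [← Real.rpow_add two_pos]
  rw [div_le_div_iff₀ (by linarith) (by positivity), one_mul]
  calc (2 : ℝ) ^ (-x) * (x * Real.log 2) ≤ 2 ^ (-x) * (2 ^ x - 1) := by gcongr; linarith
    _ = 1 - 2 ^ (-x) := by rw [mul_sub, mul_eq_one, mul_one]

theorem logb_two_le_self {x : ℝ} (hx : 0 < x) : Real.logb 2 x ≤ x :=
  (Real.logb_le_iff_le_rpow one_lt_two hx).mpr (le_two_rpow_self x)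

theorem one_le_logb_two {x : ℝ} (hx : 2 ≤ x) : 1 ≤ Real.logb 2 x :=
  (Real.le_logb_iff_rpow_le one_lt_two (by linarith)).mpr (by simpa using hx)

theorem abs_logb_div_logb_div_le {c m : ℝ} (hc : 0 < c) (hm : 2 ≤ m) :
    |Real.logb 2 (c / (Real.logb 2 m / m))| ≤ (|Real.logb 2 c| + 1) * Real.logb 2 m := by
  have m_pos : 0 < m := by linarith
  set D := Real.logb 2 m with hD
  have one_le : 1 ≤ D := one_le_logb_two hm
  have D_pos : 0 < D := by linarith
  have logb_nonneg : 0 ≤ Real.logb 2 D := Real.logb_nonneg one_lt_two one_le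
  have logb_le : Real.logb 2 D ≤ D := logb_two_le_self D_pos
  rw [Real.logb_div hc.ne' (by positivity), Real.logb_div D_pos.ne' m_pos.ne', ← hD]
  calc |Real.logb 2 c - (Real.logb 2 D - D)|
      ≤ |Real.logb 2 c| + |Real.logb 2 D - D| := abs_sub _ _
    _ ≤ |Real.logb 2 c| * D + D := by
        gcongr
        · exact le_mul_of_one_le_right (abs_nonneg _) one_le
        · rw [abs_le]; constructor <;> linarith
    _ = (|Real.logb 2 c| + 1) * D := by ring

theorem tsum_finsetProd_le_exp_tsum {ι : Type*} {f : ι → ℝ} (hf : ∀ i, 0 ≤ f i)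
    (hfs : Summable f) : ∑' S : Finset ι, ∏ i ∈ S, f i ≤ Real.exp (∑' i, f i) := by
  have hprod := summable_finsetProd_of_summable_nonneg hf hfs
  rw [← tprod_one_add hprod]
  refine (multipliable_one_add_of_summable_prod hprod).tprod_le_of_prod_le fun S => ?_
  exact (Real.prod_one_add_le_exp_sum S hf).trans
    (Real.exp_le_exp.mpr (hfs.sum_le_tsum S fun i _ => hf i))

theorem card_sq_le_two_mul_sum_add_one (S : Finset ℕ) : S.card ^ 2 ≤ 2 * ∑ i ∈ S, (i + 1) := by
  induction S using Finset.induction_on_max with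
  | empty => simp
  | insert a S lt_a ih =>
    have card_le : S.card ≤ a := by
      simpa using Finset.card_le_card fun i hi => Finset.mem_range.mpr (lt_a i hi)
    have notMem : a ∉ S := fun ha => lt_irrefl a (lt_a a ha)
    rw [Finset.card_insert_of_notMem notMem, Finset.sum_insert notMem]
    nlinarith

theorem bitFinset_eq_toFinset_bitIndices (k : ℕ) : bitFinset k = k.bitIndices.toFinset := by
  ext i
  have lt_of_testBit (h : k.testBit i) : i < k + 1 :=
    Nat.lt_succ_of_lt (i.lt_two_pow_self.trans_le (Nat.ge_two_pow_of_testBit h))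
  simpa [bitFinset] using lt_of_testBit

theorem bitFinset_injective : Function.Injective bitFinset := by
  rw [funext bitFinset_eq_toFinset_bitIndices]
  exact Finset.equivBitIndices.injective

section Digits

variable {s : ℕ}

/-- The positions `(j, i)` of all nonzero binary digits of `k`, the digits of each `k j` being
indexed from `0` as in `bitFinset`. It encodes `k` as a single finite set, which turns a sum over
`k` into a sum over finite sets. -/
def digitPositions (k : Fin s → ℕ) : Finset (Σ _ : Fin s, ℕ) :=
  Finset.univ.sigma fun j => bitFinset (k j)

theorem digitPositions_injective :
    Function.Injective (digitPositions : (Fin s → ℕ) → Finset (Σ _ : Fin s, ℕ)) := by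
  intro k k' h
  ext j
  refine bitFinset_injective (Finset.ext fun i => ?_)
  simpa [digitPositions] using Finset.ext_iff.mp h ⟨j, i⟩

theorem prod_digitPositions_pow {M : Type*} [CommMonoid M] (q : M) (k : Fin s → ℕ) :
    ∏ p ∈ digitPositions k, q ^ (p.2 + 1) = q ^ norm1Vec k := by
  rw [Finset.prod_pow_eq_pow_sum, digitPositions, Finset.sum_sigma]
  rfl

theorem hasSum_sigma_pow_succ {q : ℝ} (h0 : 0 ≤ q) (h1 : q < 1) :
    HasSum (fun p : Σ _ : Fin s, ℕ => q ^ (p.2 + 1)) (s * (q / (1 - q))) := by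
  have geometric : HasSum (fun i : ℕ => q ^ (i + 1)) (q / (1 - q)) := by
    simpa only [pow_succ', div_eq_mul_inv] using (hasSum_geometric_of_lt_one h0 h1).mul_left q
  have summable : Summable fun p : Σ _ : Fin s, ℕ => q ^ (p.2 + 1) :=
    (summable_sigma_of_nonneg fun _ => by positivity).mpr
      ⟨fun _ => geometric.summable, Summable.of_finite⟩
  simpa using (hasSum_fintype fun _ : Fin s => q / (1 - q)).sigma_of_hasSum
    (fun _ => geometric) summable

theorem summable_pow_norm1Vec {q : ℝ} (h0 : 0 ≤ q) (h1 : q < 1) :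
    Summable fun k : Fin s → ℕ => q ^ norm1Vec k := by
  simpa only [Function.comp_def, prod_digitPositions_pow] using
    (summable_finsetProd_of_summable_nonneg (fun _ => by positivity)
      (hasSum_sigma_pow_succ h0 h1).summable).comp_injective
      (digitPositions_injective (s := s))

theorem tsum_pow_norm1Vec_le {q : ℝ} (h0 : 0 ≤ q) (h1 : q < 1) :
    ∑' k : Fin s → ℕ, q ^ norm1Vec k ≤ Real.exp (s * (q / (1 - q))) := by
  have hasSum := hasSum_sigma_pow_succ (s := s) h0 h1
  have term_nonneg (p : Σ _ : Fin s, ℕ) : 0 ≤ q ^ (p.2 + 1) := by positivity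
  calc ∑' k : Fin s → ℕ, q ^ norm1Vec k
      = ∑' k : Fin s → ℕ, ∏ p ∈ digitPositions k, q ^ (p.2 + 1) := by
        simp only [prod_digitPositions_pow]
    _ ≤ ∑' S : Finset (Σ _ : Fin s, ℕ), ∏ p ∈ S, q ^ (p.2 + 1) :=
        tsum_comp_le_tsum_of_inj
          (summable_finsetProd_of_summable_nonneg term_nonneg hasSum.summable)
          (fun S => Finset.prod_nonneg fun p _ => term_nonneg p) digitPositions_injective
    _ ≤ Real.exp (s * (q / (1 - q))) :=
        hasSum.tsum_eq ▸ tsum_finsetProd_le_exp_tsum term_nonneg hasSum.summable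

theorem tsum_two_rpow_neg_pow_norm1Vec_le {x : ℝ} (hx : 0 < x) :
    ∑' k : Fin s → ℕ, ((2 : ℝ) ^ (-x)) ^ norm1Vec k ≤ 2 ^ (4 * s / x) := by
  have log_gt : 1 / 2 < Real.log 2 := by linarith [Real.log_two_gt_d9]
  have lt_one : (2 : ℝ) ^ (-x) < 1 :=
    Real.rpow_lt_one_of_one_lt_of_neg one_lt_two (neg_lt_zero.mpr hx)
  refine (tsum_pow_norm1Vec_le (by positivity) lt_one).trans ?_
  rw [Real.rpow_def_of_pos two_pos (4 * s / x), Real.exp_le_exp]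
  calc s * ((2 : ℝ) ^ (-x) / (1 - 2 ^ (-x))) ≤ s * (1 / (x * Real.log 2)) :=
        mul_le_mul_of_nonneg_left (two_rpow_neg_div_one_sub_le hx) s.cast_nonneg
    _ ≤ Real.log 2 * (4 * s / x) := by
        rw [mul_one_div, mul_div_assoc', div_le_div_iff₀ (by positivity) hx]
        have : (1 : ℝ) ≤ 4 * Real.log 2 ^ 2 := by nlinarith
        nlinarith [mul_le_mul_of_nonneg_left this (by positivity : 0 ≤ s * x)]

theorem norm0Vec_sq_le (k : Fin s → ℕ) : norm0Vec k ^ 2 ≤ 2 * s * norm1Vec k := by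
  calc norm0Vec k ^ 2 ≤ s * ∑ j, (bitFinset (k j)).card ^ 2 := by
        simpa [norm0Vec] using
          sq_sum_le_card_mul_sum_sq (s := Finset.univ) (f := fun j => (bitFinset (k j)).card)
    _ ≤ s * ∑ j, 2 * norm1 (k j) := by
        gcongr; exact card_sq_le_two_mul_sum_add_one _
    _ = 2 * s * norm1Vec k := by rw [← Finset.mul_sum, norm1Vec]; ring

theorem two_inv_pow_mul_le_of_le_norm1Vec {r δ T : ℝ} (hs : 0 < s) (hr : 0 < r) (hδ : 0 < δ)
    (hδ1 : δ ≤ 1) {k : Fin s → ℕ} (hT : T ≤ norm1Vec k) :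
    (2 : ℝ)⁻¹ ^ norm1Vec k * r ^ norm0Vec k * (norm0Vec k).factorial ≤
      2 ^ (-((1 - δ) * T) + 2 * s / δ * Real.logb 2 (8 * s * r / δ) ^ 2) *
        ((2 : ℝ) ^ (-(δ / 2))) ^ norm1Vec k := by
  have norm0_sq_le : (norm0Vec k : ℝ) ^ 2 ≤ 2 * s * norm1Vec k := mod_cast norm0Vec_sq_le k
  set n := norm0Vec k
  set N := norm1Vec k
  set l := Real.logb 2 (8 * s * r / δ)
  have : (0 : ℝ) < s := mod_cast hs
  have factorial_le : r ^ n * n.factorial ≤ (2 : ℝ) ^ (δ / 2 * N + 2 * s / δ * l ^ 2) := by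
    have h := pow_mul_factorial_le_two_rpow hr (a := δ / (8 * s)) (by positivity) n
    refine h.trans (Real.rpow_le_rpow_of_exponent_le one_le_two (add_le_add ?_ (le_of_eq ?_)))
    · calc 2 * (δ / (8 * s)) * (n : ℝ) ^ 2 ≤ 2 * (δ / (8 * s)) * (2 * s * N) := by gcongr
        _ = δ / 2 * N := by field_simp; ring
    · rw [show r / (δ / (8 * s)) = 8 * s * r / δ by field_simp]
      field_simp; ring
  calc (2 : ℝ)⁻¹ ^ N * r ^ n * n.factorial
      = 2 ^ (-(N : ℝ)) * (r ^ n * n.factorial) := by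
        rw [Real.rpow_neg two_pos.le, Real.rpow_natCast, inv_pow, mul_assoc]
    _ ≤ 2 ^ (-(N : ℝ)) * 2 ^ (δ / 2 * N + 2 * s / δ * l ^ 2) := by gcongr
    _ = 2 ^ (-((1 - δ) * N) + 2 * s / δ * l ^ 2) * (2 ^ (-(δ / 2))) ^ N := by
        rw [← Real.rpow_mul_natCast two_pos.le, ← Real.rpow_add two_pos, ← Real.rpow_add two_pos]
        ring_nf
    _ ≤ 2 ^ (-((1 - δ) * T) + 2 * s / δ * l ^ 2) * (2 ^ (-(δ / 2))) ^ N := by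
        gcongr
        exact one_le_two

theorem summable_and_tsum_le_of_le_norm1Vec {r δ T : ℝ} (hs : 0 < s) (hr : 0 < r) (hδ : 0 < δ)
    (hδ1 : δ ≤ 1) (p : (Fin s → ℕ) → Prop) [DecidablePred p] (hp : ∀ k, p k → T ≤ norm1Vec k) :
    Summable (fun k : Fin s → ℕ =>
      if p k then (2 : ℝ)⁻¹ ^ norm1Vec k * r ^ norm0Vec k * (norm0Vec k).factorial else 0) ∧
    ∑' k : Fin s → ℕ,
      (if p k then (2 : ℝ)⁻¹ ^ norm1Vec k * r ^ norm0Vec k * (norm0Vec k).factorial else 0) ≤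
      2 ^ (-((1 - δ) * T) + 2 * s / δ * (Real.logb 2 (8 * s * r / δ) ^ 2 + 4)) := by
  set q := (2 : ℝ) ^ (-(δ / 2))
  set K := (2 : ℝ) ^ (-((1 - δ) * T) + 2 * s / δ * Real.logb 2 (8 * s * r / δ) ^ 2) with hK
  have q_lt_one : q < 1 := Real.rpow_lt_one_of_one_lt_of_neg one_lt_two (by linarith)
  have summable_major : Summable fun k : Fin s → ℕ => K * q ^ norm1Vec k :=
    (summable_pow_norm1Vec (by positivity) q_lt_one).mul_left K
  have term_le (k : Fin s → ℕ) : (if p k then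
      (2 : ℝ)⁻¹ ^ norm1Vec k * r ^ norm0Vec k * (norm0Vec k).factorial else 0) ≤
      K * q ^ norm1Vec k := by
    split_ifs with h
    · exact two_inv_pow_mul_le_of_le_norm1Vec hs hr hδ hδ1 (hp k h)
    · positivity
  have summable_tail := summable_major.of_nonneg_of_le
    (fun k => by split_ifs <;> positivity) term_le
  refine ⟨summable_tail, ?_⟩
  calc _ ≤ ∑' k : Fin s → ℕ, K * q ^ norm1Vec k := summable_tail.tsum_le_tsum term_le summable_major
    _ = K * ∑' k : Fin s → ℕ, q ^ norm1Vec k := tsum_mul_left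
    _ ≤ K * 2 ^ (4 * s / (δ / 2)) := by
        gcongr; exact tsum_two_rpow_neg_pow_norm1Vec_le (half_pos hδ)
    _ = _ := by rw [hK, ← Real.rpow_add two_pos]; ring_nf

end Digits

open scoped Classical in
theorem tail_sum_bound_general (s : ℕ) (hs : 1 ≤ s) (c ρ : ℝ) (hρ : 0 < ρ) :
    ∃ B₁ : ℝ, ∀ m : ℕ, 2 ≤ m →
      Summable (fun k : Fin s → ℕ =>
        if k ≠ 0 ∧ c * m ^ 2 / s < (norm1Vec k : ℝ) then
          (2 : ℝ)⁻¹ ^ norm1Vec k * ρ⁻¹ ^ norm0Vec k * (Nat.factorial (norm0Vec k) : ℝ)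
        else 0) ∧
      (∑' k : Fin s → ℕ,
        if k ≠ 0 ∧ c * m ^ 2 / s < (norm1Vec k : ℝ) then
          (2 : ℝ)⁻¹ ^ norm1Vec k * ρ⁻¹ ^ norm0Vec k * (Nat.factorial (norm0Vec k) : ℝ)
        else 0) ≤
        (2 : ℝ) ^ (-(c * m ^ 2 / s) + B₁ * m * Real.logb 2 m) := by
  set A := |Real.logb 2 (8 * s * ρ⁻¹)| + 1
  refine ⟨c / s + 2 * s * (A ^ 2 + 4), fun m hm => ?_⟩
  have : (0 : ℝ) < s := mod_cast hs
  have two_le_m : (2 : ℝ) ≤ m := mod_cast hm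
  have m_pos : (0 : ℝ) < m := by linarith
  have logb_div_le := abs_logb_div_logb_div_le (c := 8 * s * ρ⁻¹) (by positivity) two_le_m
  set D := Real.logb 2 (m : ℝ)
  have one_le : 1 ≤ D := one_le_logb_two two_le_m
  have D_le : D ≤ m := logb_two_le_self m_pos
  have tail := summable_and_tsum_le_of_le_norm1Vec (δ := D / m) hs (inv_pos.mpr hρ)
    (by positivity) ((div_le_one m_pos).mpr D_le) (fun k => k ≠ 0 ∧ c * m ^ 2 / s < norm1Vec k)
    fun k hk => hk.2.le
  refine ⟨tail.1, tail.2.trans (Real.rpow_le_rpow_of_exponent_le one_le_two ?_)⟩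
  have cost_le : Real.logb 2 (8 * s * ρ⁻¹ / (D / m)) ^ 2 + 4 ≤ (A ^ 2 + 4) * D ^ 2 := by
    have : Real.logb 2 (8 * s * ρ⁻¹ / (D / m)) ^ 2 ≤ (A * D) ^ 2 := sq_le_sq.mpr
      (logb_div_le.trans (le_abs_self _))
    nlinarith
  calc -((1 - D / m) * (c * m ^ 2 / s)) +
        2 * s / (D / m) * (Real.logb 2 (8 * s * ρ⁻¹ / (D / m)) ^ 2 + 4)
      ≤ -((1 - D / m) * (c * m ^ 2 / s)) + 2 * s / (D / m) * ((A ^ 2 + 4) * D ^ 2) := by gcongr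
    _ = -(c * m ^ 2 / s) + (c / s + 2 * s * (A ^ 2 + 4)) * m * D := by field_simp; ring

open scoped Classical in
/-- with `λ = 3log(2)²/π²`, for fixed `s ≥ 1` and `ρ ∈ (0,1)` there is a
constant `B₁` such that for all `m ≥ 2`, the sum over `𝐤 ∈ ℕ₀^s ∖ {0}` with
`‖𝛋‖₁ > λm²/s` of `2^{−‖𝛋‖₁} ρ^{−‖𝛋‖₀} (‖𝛋‖₀)!` converges and is at most
`2^{−λm²/s + B₁ m log₂ m}`. -/
theorem tail_sum_bound (s : ℕ) (hs : 1 ≤ s) (ρ : ℝ) (hρ : ρ ∈ Set.Ioo (0:ℝ) 1) :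
    ∃ B₁ : ℝ, ∀ m : ℕ, 2 ≤ m →
      Summable (fun k : Fin s → ℕ =>
        if k ≠ 0 ∧ lam * m ^ 2 / s < (norm1Vec k : ℝ) then
          (2 : ℝ)⁻¹ ^ norm1Vec k * ρ⁻¹ ^ norm0Vec k * (Nat.factorial (norm0Vec k) : ℝ)
        else 0) ∧
      (∑' k : Fin s → ℕ,
        if k ≠ 0 ∧ lam * m ^ 2 / s < (norm1Vec k : ℝ) then
          (2 : ℝ)⁻¹ ^ norm1Vec k * ρ⁻¹ ^ norm0Vec k * (Nat.factorial (norm0Vec k) : ℝ)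
        else 0) ≤
        (2 : ℝ) ^ (-(lam * m ^ 2 / s) + B₁ * m * Real.logb 2 m) :=
  tail_sum_bound_general s hs lam ρ hρ.1

end MedianQMC
end
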